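/- Let R be a Noetherian ring, M a finitely generated R-module, x = x_1, ..., x_r a sequence of elements of R, and N a submodule of M such that N ⊆ ⋂_{n>0} (x_1^n, ..., x_r^n)^lim_M. Then, writing M̄ = M/N, the limit closure of x in M̄ satisfies (x)^lim_{M̄} = (x)^lim_M / N. -/

import Mathlib

/-!
Write `p = x₁⋯x_r` and `J n = (x₁^n, …, x_r^n)`. Multiplication by `p^k` carries `J n • M` into
`J (n + k) • M` (`prod_pow_smul_mem`), so the submodules defining the limit closure form a chain
and membership means `p^(n+1) • m ∈ J (n+2) • M` for a single `n` (`mem_limitClosure_iff`).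

The inclusion `⊇` is functoriality of these conditions along `M → M/N`. For `⊆`, a class `m̄` in
`(x)^lim` of `M/N` gives `p^n • m = a + z` with `a ∈ J (n+1) • M` and `z ∈ N`. Since `z` lies in
the limit closure of `x₁^(n+1), …, x_r^(n+1)`, some `k` has
`p^((n+1)k) • z ∈ J ((n+1)(k+1)) • M`. As `p^((n+1)k) • a` lies in the same submodule, so does
`p^((n+1)k+n) • m`, and `(n+1)(k+1) = ((n+1)k+n) + 1`; hence `m` is in `(x)^lim_M`.
-/

open IsLocalRing

/-- The limit closure `(x)^lim_M = ⋃_{n>0} ((x₁^{n+1}, …, x_r^{n+1})M :_M (x₁⋯x_r)^n)` of a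
sequence `x = x₁, …, x_r` of elements of `R` in the module `M`; the union of the increasing
family of submodules is expressed as a supremum. -/
def limitClosure {R : Type*} [CommRing R] {M : Type*} [AddCommGroup M] [Module R M]
    {r : ℕ} (x : Fin r → R) : Submodule R M :=
  ⨆ n : ℕ, (Ideal.span (Set.range fun i => x i ^ (n + 2)) • (⊤ : Submodule R M)).comap
    (LinearMap.lsmul R M ((∏ i, x i) ^ (n + 1)))

lemma prod_pow_smul_mem {R : Type*} [CommRing R] {M : Type*} [AddCommGroup M] [Module R M]
    {r : ℕ} (x : Fin r → R) (n k : ℕ) {a : M}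
    (ha : a ∈ Ideal.span (Set.range fun i => x i ^ n) • (⊤ : Submodule R M)) :
    (∏ i, x i) ^ k • a ∈
      Ideal.span (Set.range fun i => x i ^ (n + k)) • (⊤ : Submodule R M) := by
  have hle : Ideal.span (Set.range fun i => x i ^ n) ≤
      Submodule.comap (LinearMap.lsmul R R ((∏ i, x i) ^ k))
        (Ideal.span (Set.range fun i => x i ^ (n + k))) := by
    rw [Ideal.span_le]
    rintro _ ⟨i, rfl⟩
    change (∏ i, x i) ^ k * x i ^ n ∈ Ideal.span (Set.range fun i => x i ^ (n + k))
    obtain ⟨c, hc⟩ := pow_dvd_pow_of_dvd (Finset.dvd_prod_of_mem x (Finset.mem_univ i)) k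
    have : (∏ i, x i) ^ k * x i ^ n = c * x i ^ (n + k) := by rw [hc]; ring
    rw [this]
    exact Ideal.mul_mem_left _ _ (Ideal.subset_span ⟨i, rfl⟩)
  induction ha using Submodule.smul_induction_on' with
  | smul s hs m _ =>
    rw [smul_smul]
    exact Submodule.smul_mem_smul (hle hs) trivial
  | add y _ z _ hy hz =>
    rw [smul_add]
    exact add_mem hy hz

/-- Membership in the limit closure is witnessed by a single exponent, because the submodules in
its definition form a chain. -/
lemma mem_limitClosure_iff {R : Type*} [CommRing R] {M : Type*} [AddCommGroup M] [Module R M]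
    {r : ℕ} (x : Fin r → R) (m : M) :
    m ∈ limitClosure (M := M) x ↔ ∃ n : ℕ, (∏ i, x i) ^ (n + 1) • m ∈
      Ideal.span (Set.range fun i => x i ^ (n + 2)) • (⊤ : Submodule R M) := by
  unfold limitClosure
  rw [Submodule.mem_iSup_of_directed]
  · rfl
  · refine Monotone.directed_le (monotone_nat_of_le_succ fun n m hm => ?_)
    change (∏ i, x i) ^ (n + 1 + 1) • m ∈
      Ideal.span (Set.range fun i => x i ^ (n + 1 + 2)) • (⊤ : Submodule R M)
    rw [pow_succ', mul_smul]
    simpa using prod_pow_smul_mem x (n + 2) 1 hm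

/-- If `N ⊆ ⋂_{n>0} (x₁^n, …, x_r^n)^lim_M`, then, writing `M̄ = M/N`, one has
`(x)^lim_{M̄} = (x)^lim_M / N`. -/
theorem limitClosure_quotient
    {R : Type*} [CommRing R] [IsNoetherianRing R]
    {M : Type*} [AddCommGroup M] [Module R M] [Module.Finite R M]
    {r : ℕ} (x : Fin r → R) (N : Submodule R M)
    (hN : N ≤ ⨅ n : ℕ, limitClosure (M := M) (fun i => x i ^ (n + 1))) :
    limitClosure (M := M ⧸ N) x = (limitClosure (M := M) x).map N.mkQ := by
  have hmap : ∀ I : Ideal R, I • (⊤ : Submodule R (M ⧸ N)) =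
      (I • (⊤ : Submodule R M)).map N.mkQ := fun I => by
    rw [Submodule.map_smul'', Submodule.map_top, Submodule.range_mkQ]
  ext q
  obtain ⟨m, rfl⟩ := N.mkQ_surjective q
  constructor
  · intro hq
    obtain ⟨n, hn⟩ := (mem_limitClosure_iff x _).1 hq
    refine Submodule.mem_map_of_mem ((mem_limitClosure_iff x m).2 ?_)
    rw [hmap, ← map_smul] at hn
    obtain ⟨a, ha, hav⟩ := hn
    have hz : (∏ i, x i) ^ (n + 1) • m - a ∈ N := (Submodule.Quotient.eq N).1 hav.symm
    obtain ⟨k, hk⟩ := (mem_limitClosure_iff _ _).1 ((Submodule.mem_iInf _).1 (hN hz) (n + 1))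
    simp only [Finset.prod_pow, ← pow_mul] at hk
    have ha' := prod_pow_smul_mem x (n + 2) ((n + 1 + 1) * (k + 1)) ha
    -- `p` occurs to the power `(n+2)(k+1) + (n+1)`; the witness of `mem_limitClosure_iff` is one
    -- less.
    refine ⟨(n + 2) * (k + 1) + n, ?_⟩
    have e1 : (n + 1 + 1) * (k + 2) = (n + 2) * (k + 1) + n + 2 := by ring
    have e2 : n + 2 + (n + 1 + 1) * (k + 1) = (n + 2) * (k + 1) + n + 2 := by ring
    rw [e1] at hk
    rw [e2] at ha'
    have h := add_mem hk ha'
    rw [← smul_add, sub_add_cancel, smul_smul, ← pow_add] at h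
    exact h
  · rintro ⟨m', hm', hq⟩
    rw [← hq]
    obtain ⟨n, hn⟩ := (mem_limitClosure_iff x m').1 hm'
    refine (mem_limitClosure_iff x _).2 ⟨n, ?_⟩
    rw [hmap, ← map_smul]
    exact Submodule.mem_map_of_mem hn
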